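/- The topological product S4.1 ×_t S4 is strictly larger than the fusion: S4.1 ×_t S4 ≠ S4.1 ∗ S4. -/

import Mathlib

/- ============== Formulas ============== -/

/-- Unimodal formulas. -/
inductive MForm : Type
  | var : ℕ → MForm
  | bot : MForm
  | imp : MForm → MForm → MForm
  | box : MForm → MForm

namespace MForm
def neg (A : MForm) : MForm := A.imp .bot
def dia (A : MForm) : MForm := (MForm.box A.neg).neg
def subst (σ : ℕ → MForm) : MForm → MForm
  | var n => σ n
  | bot => bot
  | imp A B => (subst σ A).imp (subst σ B)
  | box A => MForm.box (subst σ A)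
end MForm

/-- Bimodal formulas (`box 0` is □₁ and `box 1` is □₂). -/
inductive BForm : Type
  | var : ℕ → BForm
  | bot : BForm
  | imp : BForm → BForm → BForm
  | box : Fin 2 → BForm → BForm

namespace BForm
def neg (A : BForm) : BForm := A.imp .bot
def dia (i : Fin 2) (A : BForm) : BForm := (BForm.box i A.neg).neg
def subst (σ : ℕ → BForm) : BForm → BForm
  | var n => σ n
  | bot => bot
  | imp A B => (subst σ A).imp (subst σ B)
  | box i A => BForm.box i (subst σ A)
end BForm

/-- Translation of a unimodal formula into the bimodal language,
reading □ as □ᵢ. -/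
def MForm.toB (i : Fin 2) : MForm → BForm
  | .var n => .var n
  | .bot => .bot
  | .imp A B => (MForm.toB i A).imp (MForm.toB i B)
  | .box A => BForm.box i (MForm.toB i A)

/- ============== Normal modal logics ============== -/

/-- Provability in the smallest normal unimodal logic containing the axioms `Ax`:
classical tautologies (via a Hilbert axiomatization), the normality axiom,
modus ponens, necessitation and uniform substitution. -/
inductive MProv (Ax : Set MForm) : MForm → Prop
  | axm {A : MForm} : A ∈ Ax → MProv Ax A
  | pl1 {A B : MForm} : MProv Ax (A.imp (B.imp A))
  | pl2 {A B C : MForm} : MProv Ax ((A.imp (B.imp C)).imp ((A.imp B).imp (A.imp C)))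
  | pl3 {A : MForm} : MProv Ax ((A.neg.neg).imp A)
  | kax {A B : MForm} : MProv Ax ((MForm.box (A.imp B)).imp ((MForm.box A).imp (MForm.box B)))
  | mp {A B : MForm} : MProv Ax (A.imp B) → MProv Ax A → MProv Ax B
  | nec {A : MForm} : MProv Ax A → MProv Ax (MForm.box A)
  | subst {A : MForm} (σ : ℕ → MForm) : MProv Ax A → MProv Ax (A.subst σ)

/-- Provability in the smallest normal bimodal logic containing the axioms `Ax`. -/
inductive BProv (Ax : Set BForm) : BForm → Prop
  | axm {A : BForm} : A ∈ Ax → BProv Ax A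
  | pl1 {A B : BForm} : BProv Ax (A.imp (B.imp A))
  | pl2 {A B C : BForm} : BProv Ax ((A.imp (B.imp C)).imp ((A.imp B).imp (A.imp C)))
  | pl3 {A : BForm} : BProv Ax ((A.neg.neg).imp A)
  | kax (i : Fin 2) {A B : BForm} :
      BProv Ax ((BForm.box i (A.imp B)).imp ((BForm.box i A).imp (BForm.box i B)))
  | mp {A B : BForm} : BProv Ax (A.imp B) → BProv Ax A → BProv Ax B
  | nec (i : Fin 2) {A : BForm} : BProv Ax A → BProv Ax (BForm.box i A)
  | subst {A : BForm} (σ : ℕ → BForm) : BProv Ax A → BProv Ax (A.subst σ)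

/-- The propositional letter p. -/
def pM : MForm := .var 0

/-- Axioms of S4 : □p→p and □p→□□p. -/
def S4Ax : Set MForm := {(MForm.box pM).imp pM, (MForm.box pM).imp (MForm.box (MForm.box pM))}

/-- The McKinsey axiom □◇p→◇□p. -/
def McKM : MForm := (MForm.box pM.dia).imp (MForm.box pM).dia

/-- The logic S4. -/
def S4L : Set MForm := {A | MProv S4Ax A}

/-- The logic S4.1 = S4 + McKinsey. -/
def S41L : Set MForm := {A | MProv (S4Ax ∪ {McKM}) A}

/-- Axioms of the fusion S4.1 ∗ S4 : all theorems of S4.1 read with □₁ together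
with all theorems of S4 read with □₂. -/
def FusionAx : Set BForm := (MForm.toB 0 '' S41L) ∪ (MForm.toB 1 '' S4L)

/-- The fusion S4.1 ∗ S4 (as a normal bimodal logic). -/
def FusionL : Set BForm := {A | BProv FusionAx A}

def pB : BForm := .var 0

/-- The formula ◇₁□₂(◇₁p → □₁p). -/
def MKB : BForm := BForm.dia 0 (BForm.box 1 ((BForm.dia 0 pB).imp (BForm.box 0 pB)))

/-- The logic L = S4.1 ∗ S4 + ◇₁□₂(◇₁p → □₁p). -/
def LL : Set BForm := {A | BProv (FusionAx ∪ {MKB}) A}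

/- ============== Kripke semantics ============== -/

/-- Truth of a bimodal formula at a point of a Kripke 2-frame `(W, R 0, R 1)`
under valuation `V`. -/
def BSat {W : Type} (R : Fin 2 → W → W → Prop) (V : ℕ → W → Prop) : W → BForm → Prop
  | x, .var n => V n x
  | _, .bot => False
  | x, .imp A B => BSat R V x A → BSat R V x B
  | x, .box i A => ∀ y, R i x y → BSat R V y A

/-- Frame validity for bimodal formulas. -/
def BValid {W : Type} (R : Fin 2 → W → W → Prop) (A : BForm) : Prop :=
  ∀ (V : ℕ → W → Prop) (x : W), BSat R V x A

/-- Truth of a unimodal formula at a point of a Kripke frame. -/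
def MKSat {W : Type} (R : W → W → Prop) (V : ℕ → W → Prop) : W → MForm → Prop
  | x, .var n => V n x
  | _, .bot => False
  | x, .imp A B => MKSat R V x A → MKSat R V x B
  | x, .box A => ∀ y, R x y → MKSat R V y A

/-- Frame validity for unimodal formulas. -/
def MKValid {W : Type} (R : W → W → Prop) (A : MForm) : Prop :=
  ∀ (V : ℕ → W → Prop) (x : W), MKSat R V x A

/- ============== Topological semantics ============== -/

/-- Topological truth of a unimodal formula: □A holds at `x` iff some open
neighbourhood of `x` satisfies `A` everywhere. -/
def MTSat {X : Type} (t : TopologicalSpace X) (V : ℕ → X → Prop) : X → MForm → Prop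
  | x, .var n => V n x
  | _, .bot => False
  | x, .imp A B => MTSat t V x A → MTSat t V x B
  | x, .box A => ∃ U : Set X, t.IsOpen U ∧ x ∈ U ∧ ∀ y ∈ U, MTSat t V y A

/-- Topological validity for unimodal formulas. -/
def MTValid {X : Type} (t : TopologicalSpace X) (A : MForm) : Prop :=
  ∀ (V : ℕ → X → Prop) (x : X), MTSat t V x A

/-- Bitopological truth of a bimodal formula: □ᵢ is interpreted via the
topology `t i`. -/
def BTSat {X : Type} (t : Fin 2 → TopologicalSpace X) (V : ℕ → X → Prop) : X → BForm → Prop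
  | x, .var n => V n x
  | _, .bot => False
  | x, .imp A B => BTSat t V x A → BTSat t V x B
  | x, .box i A => ∃ U : Set X, (t i).IsOpen U ∧ x ∈ U ∧ ∀ y ∈ U, BTSat t V y A

/-- Bitopological validity for bimodal formulas. -/
def BTValid {X : Type} (t : Fin 2 → TopologicalSpace X) (A : BForm) : Prop :=
  ∀ (V : ℕ → X → Prop) (x : X), BTSat t V x A

/-- The horizontal topology on `X × Y`: generated by the base
`{U × {y} : U open in X, y ∈ Y}`. -/
def horiz {X Y : Type} (t : TopologicalSpace X) : TopologicalSpace (X × Y) :=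
  TopologicalSpace.generateFrom
    {S | ∃ (U : Set X) (y : Y), t.IsOpen U ∧ S = U ×ˢ ({y} : Set Y)}

/-- The vertical topology on `X × Y`: generated by the base
`{{x} × U : x ∈ X, U open in Y}`. -/
def vert {X Y : Type} (t : TopologicalSpace Y) : TopologicalSpace (X × Y) :=
  TopologicalSpace.generateFrom
    {S | ∃ (x : X) (U : Set Y), t.IsOpen U ∧ S = ({x} : Set X) ×ˢ U}

/-- The topological product `L₁ ×ₜ L₂` of two unimodal logics: the set of all
bimodal formulas valid in every bitopological product `𝔛₁ × 𝔛₂` of (nonempty)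
topological spaces with `𝔛₁ ⊨ L₁` and `𝔛₂ ⊨ L₂`. -/
def TopProdLogic (L1 L2 : Set MForm) : Set BForm :=
  {A | ∀ (X Y : Type) (t1 : TopologicalSpace X) (t2 : TopologicalSpace Y),
      Nonempty X → Nonempty Y →
      (∀ B ∈ L1, MTValid t1 B) → (∀ B ∈ L2, MTValid t2 B) →
      BTValid ![horiz t1, vert t2] A}

/-- The Alexandrov topology of a (reflexive transitive) relation `R`:
the topology with base `{R(x) : x ∈ W}`. -/
def alexandrov {W : Type} (R : W → W → Prop) : TopologicalSpace W :=
  TopologicalSpace.generateFrom {S | ∃ x, S = {t | R x t}}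

/-- A space is weakly scattered if every nonempty open set contains an
isolated point. -/
def WeaklyScattered {X : Type} (t : TopologicalSpace X) : Prop :=
  ∀ U : Set X, t.IsOpen U → U.Nonempty → ∃ x ∈ U, t.IsOpen ({x} : Set X)

/-- p-morphism between Kripke 1-frames. -/
def IsPMorphism {W U : Type} (R : W → W → Prop) (S : U → U → Prop) (f : W → U) : Prop :=
  Function.Surjective f ∧ (∀ x y, R x y → S (f x) (f y)) ∧
    (∀ x u, S (f x) u → ∃ y, R x y ∧ f y = u)

/-- p-morphism between Kripke 2-frames. -/
def IsPMorphism2 {W U : Type} (R1 R2 : W → W → Prop) (S1 S2 : U → U → Prop)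
    (f : W → U) : Prop :=
  Function.Surjective f ∧
    (∀ x y, R1 x y → S1 (f x) (f y)) ∧ (∀ x u, S1 (f x) u → ∃ y, R1 x y ∧ f y = u) ∧
    (∀ x y, R2 x y → S2 (f x) (f y)) ∧ (∀ x u, S2 (f x) u → ∃ y, R2 x y ∧ f y = u)

/- ============== The frames 𝕋₂,₂ and 𝕋₂,₂₊₂ ============== -/

/-- The four-letter alphabet {a₁,a₂,b₁,b₂}: `(false, i)` is the a-letter `aᵢ₊₁`
and `(true, i)` is the b-letter `bᵢ₊₁`. -/
abbrev Letter : Type := Bool × Fin 2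

/-- `T₂,₂ = {a₁,a₂,b₁,b₂}*`. -/
abbrev T22 : Type := List Letter

/-- `T₂ = {1,2}*`. -/
abbrev T2W : Type := List (Fin 2)

/-- First relation of `𝕋₂,₂`: append a word over the a-letters. -/
def R1T (w w' : T22) : Prop := ∃ c : T22, (∀ l ∈ c, l.1 = false) ∧ w' = w ++ c

/-- Second relation of `𝕋₂,₂`: append a word over the b-letters. -/
def R2T (w w' : T22) : Prop := ∃ d : T22, (∀ l ∈ d, l.1 = true) ∧ w' = w ++ d

/-- The carrier of `𝕋₂,₂₊₂` : `⟨a, root⟩` is encoded as `(a, none)` and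
`⟨a, b⟩` with `b ∈ T₂` as `(a, some b)`. -/
abbrev W222 : Type := T22 × Option T2W

/-- Generators of `R₁′`. -/
def R1'gen : W222 → W222 → Prop := fun x y =>
  (∃ a a', R1T a a' ∧ x = (a, none) ∧ y = (a', none)) ∨
  (∃ a, x = (a, none) ∧ y = (a, some ([] : T2W)))

/-- `R₁′`: smallest reflexive transitive relation containing the generators. -/
def R1' : W222 → W222 → Prop := Relation.ReflTransGen R1'gen

/-- Generators of `R₂′`. -/
def R2'gen : W222 → W222 → Prop := fun x y =>
  (∃ a a', R2T a a' ∧ x = (a, none) ∧ y = (a', none)) ∨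
  (∃ a b b', b <+: b' ∧ x = (a, some b) ∧ y = (a, some b'))

/-- `R₂′`: smallest reflexive transitive relation containing the generators. -/
def R2' : W222 → W222 → Prop := Relation.ReflTransGen R2'gen

/- ============== Pseudo-infinite paths and the spaces 𝒴 and 𝔛 ============== -/

/-- Infinite sequences over {0,1,2}: `none` encodes 0 and `some i` encodes
`i+1 ∈ {1,2}`. -/
abbrev Seq3 : Type := ℕ → Option (Fin 2)

/-- `W_ω`: pseudo-infinite paths, i.e. sequences with finitely many nonzero
entries. -/
def Wom : Type := {s : Seq3 // {k | s k ≠ none}.Finite}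

/-- `st(s)`: the least `N` such that all entries from `N` on are zero. -/
noncomputable def stN {γ : Type} (s : ℕ → Option γ) : ℕ :=
  sInf {N | ∀ k, N ≤ k → s k = none}

/-- The first `k` entries of a sequence, as a finite word. -/
def takeSeq {γ : Type} (s : ℕ → Option γ) (k : ℕ) : List (Option γ) :=
  List.ofFn (fun i : Fin k => s i.1)

/-- `f_F`: delete all zeros from a finite word. -/
def fF {γ : Type} (l : List (Option γ)) : List γ := l.filterMap id

/-- `f_ω`: delete the zeros from a pseudo-infinite path, producing a finite word. -/
noncomputable def squash {γ : Type} (s : ℕ → Option γ) : List γ := fF (takeSeq s (stN s))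

/-- The basic set `U_k(α) = {β ∈ W_ω : α↾k = β↾k and f_F(α↾k) ⊑ f_ω(β)}`. -/
def Uset (α : Wom) (k : ℕ) : Set Wom :=
  {β | takeSeq β.1 k = takeSeq α.1 k ∧ fF (takeSeq α.1 k) <+: squash β.1}

/-- The topology `T_ω` on `W_ω` generated by the base `{U_k(α) : k > 0}`;
`𝒴 = (W_ω, T_ω)`. -/
def Tom : TopologicalSpace Wom :=
  TopologicalSpace.generateFrom {S | ∃ α k, 0 < k ∧ S = Uset α k}

/-- The basic sets of the space `𝔛`:
`U′_k(α,0) = (U_k(α) × {0}) ∪ (U_k(α) × {n ≥ k})` and `U′_k(α,n) = {⟨α,n⟩}`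
for `n ≥ 1`. -/
def U'set (α : Wom) (k n : ℕ) : Set (Wom × ℕ) :=
  if n = 0 then (Uset α k ×ˢ ({0} : Set ℕ)) ∪ (Uset α k ×ˢ {m : ℕ | k ≤ m})
  else {(α, n)}

/-- The topology of the space `𝔛 = (W_ω × ℕ, T)`. -/
def TX : TopologicalSpace (Wom × ℕ) :=
  TopologicalSpace.generateFrom {S | ∃ α k n, S = U'set α k n}

/-- Interleaving of two paths: the sequence `a_{x₁} b_{y₁} a_{x₂} b_{y₂} …`
(with `a₀ = b₀ = 0`). -/
def interleave (α β : Seq3) : ℕ → Option Letter := fun n =>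
  if n % 2 = 0 then (α (n / 2)).map (fun v => ((false, v) : Letter))
  else (β (n / 2)).map (fun v => ((true, v) : Letter))

/-- The map `g : W_ω × W_ω → T₂,₂` obtained by interleaving and deleting zeros. -/
noncomputable def gmap (α β : Seq3) : T22 := squash (interleave α β)

/-- `g` as a map on pairs. -/
noncomputable def gPair : Wom × Wom → T22 := fun q => gmap q.1.1 q.2.1

/-- `s↾n · 0^ω`. -/
def truncSeq (s : Seq3) (n : ℕ) : Seq3 := fun k => if k < n then s k else none

/-- The tail `γ` of `s = s↾n · γ`. -/
def shiftSeq (s : Seq3) (n : ℕ) : Seq3 := fun k => s (n + k)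

/-- The map `f : 𝔛 × 𝒴 → 𝕋₂,₂₊₂` :
`f(⟨α,0⟩,β) = ⟨g(α,β), root⟩` and for `n ≥ 1`,
`f(⟨α,n⟩,β) = ⟨g(α↾n·0^ω, β↾n·0^ω), f_ω(γ)⟩` where `β = β↾n·γ`. -/
noncomputable def fXY : (Wom × ℕ) × Wom → W222 := fun q =>
  if q.1.2 = 0 then (gmap q.1.1.1 q.2.1, none)
  else (gmap (truncSeq q.1.1.1 q.1.2) (truncSeq q.2.1 q.1.2),
        some (squash (shiftSeq q.2.1 q.1.2)))

/-- An effective encoding of bimodal formulas by natural numbers. -/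
def encodeB : BForm → ℕ
  | .var n => Nat.pair 0 n
  | .bot => Nat.pair 1 0
  | .imp A B => Nat.pair 2 (Nat.pair (encodeB A) (encodeB B))
  | .box i A => Nat.pair 3 (Nat.pair i.1 (encodeB A))

/-! A space validating the McKinsey axiom has no nonempty open resolvable subset. The points at
which some valuation refutes the Grzegorczyk formula `Grz` lie in resolvable subsets, and a union of
resolvable subsets is resolvable; hence the points at which *every* valuation satisfies `Grz` are
dense. In a product, each such point `x` makes `Grz₁` true along the whole vertical line through
`x`, so `◇₁□₂ Grz₁` is valid as soon as the first factor validates S4.1. It is not a theorem of the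
fusion: it fails on the Kripke frame whose first relation has a two-point cluster below a maximal
point and whose second relation is universal. -/

/-- The Grzegorczyk formula `□(□(p → □p) → p) → p`. -/
def grz : MForm :=
  (MForm.box ((MForm.box (pM.imp (MForm.box pM))).imp pM)).imp pM

/-- The formula `◇₁□₂ Grz₁` separating the topological product from the fusion. The formula `MKB`
would not do: for a crowded space `X` validating S4.1 (say, with a topology maximal among the
crowded Hausdorff ones) it fails on the product of `X` with the indiscrete space on the same set. -/
def diaBoxGrz : BForm := BForm.dia 0 (BForm.box 1 (grz.toB 0))

/-! ### Kripke frames -/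

section Kripke

variable {W : Type}

theorem MKSat_subst (R : W → W → Prop) (V : ℕ → W → Prop) (σ : ℕ → MForm) (A : MForm) (x : W) :
    MKSat R V x (A.subst σ) ↔ MKSat R (fun n y => MKSat R V y (σ n)) x A := by
  induction A generalizing x with
  | var n => rfl
  | bot => rfl
  | imp A B ihA ihB => exact imp_congr (ihA x) (ihB x)
  | box A ih => exact forall₂_congr fun y _ => ih y

theorem BSat_subst (R : Fin 2 → W → W → Prop) (V : ℕ → W → Prop) (σ : ℕ → BForm) (A : BForm)
    (x : W) : BSat R V x (A.subst σ) ↔ BSat R (fun n y => BSat R V y (σ n)) x A := by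
  induction A generalizing x with
  | var n => rfl
  | bot => rfl
  | imp A B ihA ihB => exact imp_congr (ihA x) (ihB x)
  | box i A ih => exact forall₂_congr fun y _ => ih y

theorem BSat_toB (R : Fin 2 → W → W → Prop) (V : ℕ → W → Prop) (i : Fin 2) (A : MForm) (x : W) :
    BSat R V x (A.toB i) ↔ MKSat (R i) V x A := by
  induction A generalizing x with
  | var n => rfl
  | bot => rfl
  | imp A B ihA ihB => exact imp_congr (ihA x) (ihB x)
  | box A ih => exact forall₂_congr fun y _ => ih y

theorem MProv.mkValid {R : W → W → Prop} {Ax : Set MForm} (hAx : ∀ A ∈ Ax, MKValid R A)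
    {A : MForm} (hA : MProv Ax A) : MKValid R A := by
  induction hA with
  | axm hA => exact hAx _ hA
  | pl1 => exact fun _ _ hA _ => hA
  | pl2 => exact fun _ _ hABC hAB hA => hABC hA (hAB hA)
  | pl3 => exact fun _ _ hA => not_not.mp hA
  | kax => exact fun _ _ hAB hA y hy => hAB y hy (hA y hy)
  | mp _ _ ihAB ihA => exact fun V x => ihAB V x (ihA V x)
  | nec _ ih => exact fun V _ y _ => ih V y
  | subst σ _ ih => exact fun V x => (MKSat_subst R V σ _ x).2 (ih _ x)

theorem BProv.bValid {R : Fin 2 → W → W → Prop} {Ax : Set BForm} (hAx : ∀ A ∈ Ax, BValid R A)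
    {A : BForm} (hA : BProv Ax A) : BValid R A := by
  induction hA with
  | axm hA => exact hAx _ hA
  | pl1 => exact fun _ _ hA _ => hA
  | pl2 => exact fun _ _ hABC hAB hA => hABC hA (hAB hA)
  | pl3 => exact fun _ _ hA => not_not.mp hA
  | kax => exact fun _ _ hAB hA y hy => hAB y hy (hA y hy)
  | mp _ _ ihAB ihA => exact fun V x => ihAB V x (ihA V x)
  | nec _ _ ih => exact fun V _ y _ => ih V y
  | subst σ _ ih => exact fun V x => (BSat_subst R V σ _ x).2 (ih _ x)

theorem bValid_of_mem_fusionL {R : Fin 2 → W → W → Prop}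
    (h₁ : ∀ A ∈ S4Ax ∪ {McKM}, MKValid (R 0) A) (h₂ : ∀ A ∈ S4Ax, MKValid (R 1) A)
    {A : BForm} (hA : A ∈ FusionL) : BValid R A := by
  refine BProv.bValid ?_ hA
  rintro _ (⟨B, hB, rfl⟩ | ⟨B, hB, rfl⟩) V x
  · exact (BSat_toB R V 0 B x).2 (MProv.mkValid h₁ hB V x)
  · exact (BSat_toB R V 1 B x).2 (MProv.mkValid h₂ hB V x)

theorem mkValid_of_mem_S4Ax (R : W → W → Prop) [Std.Refl R] [IsTrans W R] :
    ∀ A ∈ S4Ax, MKValid R A := by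
  rintro _ (rfl | rfl) V x hp
  · exact hp x (refl_of R x)
  · exact fun y hxy z hyz => hp z (trans_of R hxy hyz)

theorem mkValid_McKM {R : W → W → Prop} (hR : ∀ x, ∃ y, R x y ∧ ∀ z, R y z → z = y) :
    MKValid R McKM := by
  intro V x hp hnp
  obtain ⟨y, hxy, hy⟩ := hR x
  refine hp y hxy fun z hyz hpz => hnp y hxy fun z' hyz' => ?_
  rwa [hy z' hyz', ← hy z hyz]

theorem not_MKSat_grz {R : W → W → Prop} {x y : W} (hxy : R x y) (hyx : R y x) (hne : y ≠ x) :
    ¬ MKSat R (fun _ z => z ≠ x) x grz := by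
  intro h
  refine h (fun z _ hz hzx => ?_) rfl
  subst hzx
  exact hz y hxy hne z hyx rfl

end Kripke

/-- The frame on `{none, some false, some true}` refuting `◇₁□₂ Grz₁`: the first relation has the
cluster `{some false, some true}` below the maximal point `none`, the second is universal. -/
def clusterFrame : Fin 2 → Option Bool → Option Bool → Prop :=
  ![fun x y => x = none → y = none, fun _ _ => True]

theorem not_bValid_clusterFrame_diaBoxGrz : ¬ BValid clusterFrame diaBoxGrz := by
  intro h
  refine h (fun _ z => z ≠ some false) (some false) fun y _ hy => ?_
  refine not_MKSat_grz (R := clusterFrame 0) (x := some false) (y := some true) ?_ ?_ ?_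
    ((BSat_toB _ _ _ _ _).1 (hy (some false) trivial))
  all_goals simp [clusterFrame]

theorem diaBoxGrz_notMem_fusionL : diaBoxGrz ∉ FusionL := by
  have : Std.Refl (clusterFrame 0) := ⟨fun _ => id⟩
  have : IsTrans _ (clusterFrame 0) := ⟨fun _ _ _ hxy hyz => hyz ∘ hxy⟩
  have : Std.Refl (clusterFrame 1) := ⟨fun _ => trivial⟩
  have : IsTrans _ (clusterFrame 1) := ⟨fun _ _ _ _ _ => trivial⟩
  have hMcK : MKValid (clusterFrame 0) McKM :=
    mkValid_McKM fun _ => ⟨none, fun _ => rfl, fun _ hz => hz rfl⟩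
  refine fun h => not_bValid_clusterFrame_diaBoxGrz (bValid_of_mem_fusionL ?_ ?_ h)
  · rintro A (hA | rfl)
    exacts [mkValid_of_mem_S4Ax _ A hA, hMcK]
  · exact mkValid_of_mem_S4Ax _

/-! ### Resolvable subsets -/

section Resolvable

variable {X : Type*} [TopologicalSpace X] {S U V P : Set X}

/-- A subset of a space is resolvable if, as a subspace, it contains a dense set `D` whose
complement is also dense. Closures are taken in the ambient space, and `∅` is resolvable. -/
def IsResolvable (S : Set X) : Prop :=
  ∃ D ⊆ S, S ⊆ closure D ∧ S ⊆ closure (S \ D)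

theorem IsResolvable.open_inter (hS : IsResolvable S) (hU : IsOpen U) : IsResolvable (U ∩ S) := by
  obtain ⟨D, hDS, hD, hD'⟩ := hS
  refine ⟨U ∩ D, Set.inter_subset_inter_right U hDS, ?_, ?_⟩
  · exact (Set.inter_subset_inter_right U hD).trans hU.inter_closure
  · rw [← Set.inter_sdiff_distrib_left]
    exact (Set.inter_subset_inter_right U hD').trans hU.inter_closure

/-- The disjointification of a well-ordered union that preserves density: an open set meeting
`⋃ i, S i` meets what is kept from `E i`, for the first `i` such that it meets `S i`. -/
theorem iUnion_subset_closure_iUnion_sdiff {ι : Type*} [LinearOrder ι] [WellFoundedLT ι]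
    {S E : ι → Set X} (hE : ∀ i, S i ⊆ closure (E i)) :
    ⋃ i, S i ⊆ closure (⋃ i, E i \ closure (⋃ j < i, S j)) := by
  intro x hx
  refine mem_closure_iff.2 fun O hO hxO => ?_
  have hmeets : {i | (O ∩ S i).Nonempty}.Nonempty :=
    (Set.mem_iUnion.1 hx).imp fun i hi => ⟨x, hxO, hi⟩
  obtain ⟨i, ⟨z, hzO, hzi⟩, hmin⟩ := WellFounded.has_min wellFounded_lt _ hmeets
  have hdisj : Disjoint O (closure (⋃ j < i, S j)) := by
    refine Disjoint.closure_right ?_ hO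
    simp only [Set.disjoint_iUnion_right]
    exact fun j hj => Set.disjoint_iff_inter_eq_empty.2
      (Set.not_nonempty_iff_eq_empty.1 fun hne => hmin j hne hj)
  obtain ⟨w, hwO, hwE⟩ := mem_closure_iff.1 (hE i hzi) O hO hzO
  exact ⟨w, hwO, Set.mem_iUnion.2 ⟨i, hwE, Set.disjoint_left.1 hdisj hwO⟩⟩

theorem IsResolvable.iUnion {ι : Type*} {S : ι → Set X} (hS : ∀ i, IsResolvable (S i)) :
    IsResolvable (⋃ i, S i) := by
  obtain ⟨_, _⟩ := exists_wellFoundedLT ι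
  choose D hDS hD hD' using hS
  refine ⟨⋃ i, D i \ closure (⋃ j < i, S j),
    Set.iUnion_mono fun i => Set.sdiff_subset.trans (hDS i),
    iUnion_subset_closure_iUnion_sdiff hD,
    (iUnion_subset_closure_iUnion_sdiff hD').trans (closure_mono ?_)⟩
  simp only [Set.iUnion_subset_iff]
  rintro i x ⟨⟨hxS, hxD⟩, hxi⟩
  refine ⟨Set.mem_iUnion.2 ⟨i, hxS⟩, fun hx => ?_⟩
  obtain ⟨k, hxk, hxk'⟩ := Set.mem_iUnion.1 hx
  rcases lt_trichotomy i k with hik | rfl | hki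
  · exact hxk' (subset_closure (Set.mem_biUnion hik hxS))
  · exact hxD hxk
  · exact hxi (subset_closure (Set.mem_biUnion hki (hDS k hxk)))

theorem isResolvable_sdiff_interior (hV : IsOpen V)
    (hP : V ∩ interior (P \ interior P)ᶜ ⊆ P) : IsResolvable (V \ interior P) := by
  refine ⟨V \ P, Set.sdiff_subset_sdiff_right interior_subset, ?_, ?_⟩
  · rw [Set.sdiff_eq, ← closure_compl]
    exact hV.inter_closure
  · rintro z ⟨hzV, hzP⟩
    have hsub : V ∩ (P \ interior P) ⊆ (V \ interior P) \ (V \ P) :=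
      fun w hw => ⟨⟨hw.1, hw.2.2⟩, fun hw' => hw'.2 hw.2.1⟩
    refine closure_mono hsub (hV.inter_closure ⟨hzV, ?_⟩)
    by_cases hz : z ∈ P
    · exact subset_closure ⟨hz, hzP⟩
    · by_contra hzcl
      rw [← Set.mem_compl_iff, ← interior_compl] at hzcl
      exact hz (hP ⟨hzV, hzcl⟩)

end Resolvable

/-! ### Topological semantics -/

section Topological

variable {X Y : Type}

theorem MTSat_box [t : TopologicalSpace X] {V : ℕ → X → Prop} {x : X} {A : MForm} :
    MTSat t V x A.box ↔ x ∈ interior {y | MTSat t V y A} := by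
  simp only [MTSat, mem_interior, Set.subset_def, Set.mem_ofPred_eq]
  exact exists_congr fun U => by tauto

theorem MTSat_dia [t : TopologicalSpace X] {V : ℕ → X → Prop} {x : X} {A : MForm} :
    MTSat t V x A.dia ↔ x ∈ closure {y | MTSat t V y A} := by
  rw [closure_eq_compl_interior_compl]
  exact not_congr MTSat_box

theorem interior_closure_subset_closure_interior [t : TopologicalSpace X]
    (hMcK : MTValid t McKM) (P : Set X) : interior (closure P) ⊆ closure (interior P) := by
  intro x hx
  have hP : {y | MTSat t (fun _ => (· ∈ P)) y pM} = P := rfl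
  have hbox : MTSat t (fun _ => (· ∈ P)) x pM.dia.box := by
    simpa only [MTSat_box, MTSat_dia, Set.ofPred_mem_eq, hP] using hx
  simpa only [MTSat_box, MTSat_dia, Set.ofPred_mem_eq, hP] using hMcK _ x hbox

theorem eq_empty_of_isResolvable [t : TopologicalSpace X] (hMcK : MTValid t McKM) {U : Set X}
    (hU : IsOpen U) (hres : IsResolvable U) : U = ∅ := by
  obtain ⟨D, -, hD, hD'⟩ := hres
  refine Set.eq_empty_of_forall_notMem fun x hx => ?_
  have hdia : x ∈ closure (interior D) :=
    interior_closure_subset_closure_interior hMcK D (interior_maximal hD hU hx)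
  obtain ⟨y, hyU, hyD⟩ := mem_closure_iff.1 hdia U hU hx
  obtain ⟨z, hzD, -, hz⟩ := mem_closure_iff.1 (hD' hyU) _ isOpen_interior hyD
  exact hz (interior_subset hzD)

theorem exists_isResolvable_of_not_MTSat_grz [t : TopologicalSpace X] {V : ℕ → X → Prop} {x : X}
    (hx : ¬ MTSat t V x grz) : ∃ S, IsResolvable S ∧ x ∈ S := by
  obtain ⟨hbox, hp⟩ := Classical.not_imp.1 hx
  set P : Set X := {y | V 0 y}
  set Q : Set X := {y | MTSat t V y ((pM.imp pM.box).box.imp pM)}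
  have hsat : {y | MTSat t V y (pM.imp pM.box)} = (P \ interior P)ᶜ := by
    ext y
    simp only [Set.mem_compl_iff, Set.mem_sdiff, not_and_not_right]
    exact imp_congr_right fun _ => MTSat_box
  refine ⟨interior Q \ interior P, isResolvable_sdiff_interior isOpen_interior ?_,
    MTSat_box.1 hbox, fun hxP => hp (interior_subset hxP)⟩
  rintro z ⟨hzQ, hz⟩
  exact interior_subset hzQ (MTSat_box.2 (hsat ▸ hz))

theorem dense_setOf_forall_MTSat_grz [t : TopologicalSpace X] (hMcK : MTValid t McKM) :
    Dense {x | ∀ V, MTSat t V x grz} := by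
  refine dense_iff_inter_open.2 fun U hU hne => ?_
  by_contra hgrz
  have hcover : U ⊆ ⋃ S : {S : Set X // IsResolvable S}, S.1 := by
    intro x hx
    obtain ⟨V, hV⟩ : ∃ V, ¬ MTSat t V x grz :=
      not_forall.1 fun hx' => hgrz ⟨x, hx, hx'⟩
    obtain ⟨S, hS, hxS⟩ := exists_isResolvable_of_not_MTSat_grz hV
    exact Set.mem_iUnion.2 ⟨⟨S, hS⟩, hxS⟩
  have hres : IsResolvable U := by
    rw [← Set.inter_eq_left.2 hcover]
    exact (IsResolvable.iUnion Subtype.property).open_inter hU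
  exact hne.ne_empty (eq_empty_of_isResolvable hMcK hU hres)

theorem continuous_prodMk_horiz [t : TopologicalSpace X] (y : Y) :
    @Continuous X (X × Y) t (horiz t) (·, y) := by
  refine continuous_generateFrom_iff.2 ?_
  rintro _ ⟨U, y', hU, rfl⟩
  by_cases hy : y = y'
  · rw [Set.mk_preimage_prod_left (Set.mem_singleton_iff.2 hy)]
    exact hU
  · rw [Set.mk_preimage_prod_left_eq_empty (mt Set.mem_singleton_iff.1 hy)]
    exact isOpen_empty

theorem BTSat_box_zero_prod [t₁ : TopologicalSpace X] {t₂ : TopologicalSpace (X × Y)}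
    {V : ℕ → X × Y → Prop} {x : X} {y : Y} {A : BForm} :
    BTSat ![horiz t₁, t₂] V (x, y) (A.box 0) ↔
      x ∈ interior {x' | BTSat ![horiz t₁, t₂] V (x', y) A} := by
  rw [mem_interior]
  constructor
  · rintro ⟨U, hU, hxU, hA⟩
    exact ⟨(·, y) ⁻¹' U, fun x' hx' => hA _ hx',
      @Continuous.isOpen_preimage _ _ _ (horiz t₁) _ (continuous_prodMk_horiz y) U hU, hxU⟩
  · rintro ⟨U, hA, hU, hxU⟩
    refine ⟨U ×ˢ {y}, .basic _ ⟨U, y, hU, rfl⟩, ⟨hxU, rfl⟩, ?_⟩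
    rintro ⟨x', _⟩ ⟨hx', rfl⟩
    exact hA hx'

theorem BTSat_toB_zero_prod [t₁ : TopologicalSpace X] {t₂ : TopologicalSpace (X × Y)}
    {V : ℕ → X × Y → Prop} {x : X} {y : Y} {A : MForm} :
    BTSat ![horiz t₁, t₂] V (x, y) (A.toB 0) ↔ MTSat t₁ (fun n x' => V n (x', y)) x A := by
  induction A generalizing x with
  | var n => rfl
  | bot => rfl
  | imp A B ihA ihB => exact imp_congr ihA ihB
  | box A ih => rw [MForm.toB, BTSat_box_zero_prod, MTSat_box, Set.ext fun _ => ih]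

theorem BTSat_box_one_prod_of_forall {t₁ : TopologicalSpace (X × Y)} {t₂ : TopologicalSpace Y}
    {V : ℕ → X × Y → Prop} {x : X} {A : BForm} (hA : ∀ y, BTSat ![t₁, vert t₂] V (x, y) A)
    (y : Y) : BTSat ![t₁, vert t₂] V (x, y) (A.box 1) := by
  refine ⟨{x} ×ˢ Set.univ, .basic _ ⟨x, Set.univ, isOpen_univ, rfl⟩, ⟨rfl, trivial⟩, ?_⟩
  rintro ⟨_, y'⟩ ⟨rfl, -⟩
  exact hA y'

theorem BTValid_dia_box_toB [t₁ : TopologicalSpace X] (t₂ : TopologicalSpace Y) {A : MForm}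
    (hA : Dense {x | ∀ V, MTSat t₁ V x A}) :
    BTValid ![horiz t₁, vert t₂] (BForm.dia 0 (BForm.box 1 (A.toB 0))) := by
  rintro V ⟨x, y⟩ hbox
  obtain ⟨x', hx', hAx'⟩ :=
    hA.inter_open_nonempty _ isOpen_interior ⟨x, BTSat_box_zero_prod.1 hbox⟩
  exact interior_subset hx'
    (BTSat_box_one_prod_of_forall (fun _ => BTSat_toB_zero_prod.2 (hAx' _)) y)

end Topological

theorem diaBoxGrz_mem_topProdLogic {L₁ : Set MForm} (hL₁ : McKM ∈ L₁) (L₂ : Set MForm) :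
    diaBoxGrz ∈ TopProdLogic L₁ L₂ := by
  intro X Y t₁ t₂ _ _ h₁ _
  exact BTValid_dia_box_toB t₂ (dense_setOf_forall_MTSat_grz (h₁ McKM hL₁))

/-- the topological product S4.1 ×ₜ S4 differs from the fusion
S4.1 ∗ S4. -/
theorem topProd_ne_fusion :
    TopProdLogic S41L S4L ≠ FusionL := by
  have hMcK : McKM ∈ S41L := .axm (.inr rfl)
  exact ne_of_mem_of_not_mem' (diaBoxGrz_mem_topProdLogic hMcK S4L) diaBoxGrz_notMem_fusionL
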